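/- arXiv:2005.07373 — 4 statements merged into one kernel-verified Lean document; each statement's English description precedes it below -/
import Mathlib

section
/- Let k ≥ 11 and ℓ ≥ 1, let D be a set of kℓ distinct real numbers, and let B_1, …, B_k be the consecutive blocks of ℓ elements each in the increasing order of D (so every element of B_i is less than every element of B_{i+1}). Let A be a nonempty finite multiset of elements of D and t ≥ 1 a natural number with t ≤ |A|. Suppose that fewer than t elements of A (counted with multiplicity) lie in B_1, and at least t elements of A lie in B_1 ∪ … ∪ B_11. Then the t-th smallest element r of A (counted with multiplicity) satisfies ℓ ≤ |{x ∈ D : x ≤ r}| ≤ 11ℓ. -/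
/-- **Deterministic core of Lemma 2.**
Let `D` be a set of `k·ℓ` distinct reals (`k ≥ 11`, `ℓ ≥ 1`) split into `k`
consecutive blocks `B 0, …, B (k-1)` of `ℓ` elements each in increasing order.
Let `A` be a nonempty multiset of elements of `D` and `1 ≤ t ≤ |A|`.  If fewer
than `t` elements of `A` lie in the first block and at least `t` elements of
`A` lie in the first `11` blocks, then the `t`-th smallest element `r` of `A`
(characterized by `r ∈ A`, at least `t` elements of `A` being `≤ r`, and fewer
than `t` elements of `A` being `< r`) satisfies
`ℓ ≤ |{x ∈ D : x ≤ r}| ≤ 11·ℓ`. -/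
theorem rank_t_sample_prunes (k ℓ : ℕ) (hk : 11 ≤ k) (hℓ : 1 ≤ ℓ)
    (D : Finset ℝ) (hD : D.card = k * ℓ)
    (B : ℕ → Finset ℝ)
    (hBcard : ∀ i < k, (B i).card = ℓ)
    (hBunion : D = (Finset.range k).biUnion B)
    (hBorder : ∀ i < k, ∀ j < k, i < j → ∀ x ∈ B i, ∀ y ∈ B j, x < y)
    (A : Multiset ℝ) (hA : A ≠ 0) (hAD : ∀ x ∈ A, x ∈ D)
    (t : ℕ) (ht1 : 1 ≤ t) (htA : t ≤ Multiset.card A)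
    (hfirst : Multiset.card (A.filter (fun x => x ∈ B 0)) < t)
    (heleven :
      t ≤ Multiset.card (A.filter (fun x => x ∈ (Finset.range 11).biUnion B)))
    (r : ℝ) (hrA : r ∈ A)
    (hr_le : t ≤ Multiset.card (A.filter (fun x => x ≤ r)))
    (hr_lt : Multiset.card (A.filter (fun x => x < r)) < t) :
    ℓ ≤ (D.filter (fun x => x ≤ r)).card ∧
      (D.filter (fun x => x ≤ r)).card ≤ 11 * ℓ := by
  have key : ∀ (p q : ℝ → Prop) [DecidablePred p] [DecidablePred q],
      (∀ x ∈ A, p x → q x) →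
      Multiset.card (A.filter p) ≤ Multiset.card (A.filter q) := by
    intro p q _ _ h
    apply Multiset.card_le_card
    rw [Multiset.le_filter]
    refine ⟨Multiset.filter_le _ _, fun a ha => ?_⟩
    rw [Multiset.mem_filter] at ha
    exact h a ha.1 ha.2
  have hmem : ∀ x, x ∈ D → ∃ i, i < k ∧ x ∈ B i := by
    intro x hx
    rw [hBunion] at hx
    simpa using hx
  obtain ⟨j, hjk, hrj⟩ := hmem r (hAD r hrA)
  have hj0 : 0 < j := by
    rcases Nat.eq_zero_or_pos j with h | h
    · exfalso
      subst h
      have := key (fun x => x ≤ r) (fun x => x ∈ B 0) (by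
        intro x hx hxr
        obtain ⟨i, hik, hxi⟩ := hmem x (hAD x hx)
        rcases Nat.eq_zero_or_pos i with h | h
        · subst h; exact hxi
        · exact absurd (hBorder 0 hjk i hik h r hrj x hxi) (not_lt.mpr hxr))
      omega
    · exact h
  have hj11 : j < 11 := by
    by_contra hj
    have := key (fun x => x ∈ (Finset.range 11).biUnion B) (fun x => x < r) (by
      intro x _ hx
      rw [Finset.mem_biUnion] at hx
      obtain ⟨i, hi, hxi⟩ := hx
      rw [Finset.mem_range] at hi
      exact hBorder i (by omega) j hjk (by omega) x hxi r hrj)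
    omega
  constructor
  · rw [← hBcard 0 (by omega)]
    apply Finset.card_le_card
    intro x hx
    rw [Finset.mem_filter, hBunion, Finset.mem_biUnion]
    exact ⟨⟨0, Finset.mem_range.mpr (by omega), hx⟩,
      (hBorder 0 (by omega) j hjk hj0 x hx r hrj).le⟩
  · calc (D.filter (fun x => x ≤ r)).card
        ≤ ((Finset.range 11).biUnion B).card := by
          apply Finset.card_le_card
          intro x hx
          rw [Finset.mem_filter] at hx
          obtain ⟨i, hik, hxi⟩ := hmem x hx.1
          rw [Finset.mem_biUnion]
          refine ⟨i, Finset.mem_range.mpr ?_, hxi⟩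
          by_contra hi
          exact absurd (hBorder j hjk i hik (by omega) r hrj x hxi) (not_lt.mpr hx.2)
      _ ≤ (Finset.range 11).card * ℓ := by
          apply Finset.card_biUnion_le_card_mul
          intro i hi
          rw [Finset.mem_range] at hi
          exact (hBcard i (by omega)).le
      _ = 11 * ℓ := by rw [Finset.card_range]
end

section
/- Let M be a pseudometric space, q ∈ M, and let D_1, …, D_k be pairwise disjoint finite subsets of M whose union D has at least ℓ elements, for a natural number ℓ ≥ 1. For each i, let S_i ⊆ D_i be a subset with |S_i| = min(ℓ, |D_i|) such that dist(s, q) ≤ dist(y, q) for every s ∈ S_i and every y ∈ D_i \ S_i. Then there exists a subset T of S_1 ∪ … ∪ S_k with |T| = ℓ such that dist(t, q) ≤ dist(y, q) for every t ∈ T and every y ∈ D \ T; i.e., a set of ℓ nearest neighbors of q in D can be found inside the union of the locally retained points. -/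
theorem exists_nearest_aux {M : Type*} [DecidableEq M] (f : M → ℝ) (U : Finset M) (n : ℕ)
    (hn : n ≤ U.card) :
    ∃ T : Finset M, T ⊆ U ∧ T.card = n ∧ ∀ t ∈ T, ∀ y ∈ U \ T, f t ≤ f y := by
  induction n with
  | zero => exact ⟨∅, by simp, by simp, by simp⟩
  | succ n ih =>
    obtain ⟨T, hTU, hTc, hT⟩ := ih (by omega)
    have hne : (U \ T).Nonempty := by
      rw [← Finset.card_pos, Finset.card_sdiff_of_subset hTU]
      omega
    obtain ⟨x, hx, hmin⟩ := Finset.exists_min_image (U \ T) f hne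
    have hx' := Finset.mem_sdiff.1 hx
    refine ⟨insert x T, Finset.insert_subset hx'.1 hTU, ?_, ?_⟩
    · rw [Finset.card_insert_of_notMem hx'.2, hTc]
    · intro t ht y hy
      have hy' : y ∈ U \ T := by
        simp only [Finset.mem_sdiff, Finset.mem_insert, not_or] at hy ⊢
        exact ⟨hy.1, hy.2.2⟩
      rcases Finset.mem_insert.1 ht with rfl | ht
      · exact hmin y hy'
      · exact hT t ht y hy'

/-- **Local pruning retains a set of `ℓ` nearest neighbors.**
Let `M` be a pseudometric space, `q ∈ M`, and `Dpart 0, …, Dpart (k-1)`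
pairwise disjoint finite subsets of `M` whose union `D` has at least `ℓ ≥ 1`
elements.  If each machine `i` keeps a subset `S i ⊆ Dpart i` of size
`min (ℓ, |Dpart i|)` consisting of points closest to `q` (i.e. every kept
point is at distance at most that of every discarded point of `Dpart i`),
then there is a set `T` of `ℓ` points inside `S 0 ∪ ⋯ ∪ S (k-1)` such that
every point of `T` is at distance from `q` at most that of every point of
`D \ T`; i.e. `T` is a set of `ℓ` nearest neighbors of `q` in `D`. -/
theorem local_pruning_keeps_nearest_neighbors
    {M : Type*} [PseudoMetricSpace M] [DecidableEq M] (q : M)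
    (k ℓ : ℕ) (hℓ : 1 ≤ ℓ)
    (Dpart : Fin k → Finset M)
    (hdisj : ∀ i j : Fin k, i ≠ j → Disjoint (Dpart i) (Dpart j))
    (hbig : ℓ ≤ (Finset.univ.biUnion Dpart).card)
    (S : Fin k → Finset M)
    (hsub : ∀ i, S i ⊆ Dpart i)
    (hcard : ∀ i, (S i).card = min ℓ (Dpart i).card)
    (hclose : ∀ i, ∀ s ∈ S i, ∀ y ∈ Dpart i \ S i, dist s q ≤ dist y q) :
    ∃ T : Finset M, T ⊆ Finset.univ.biUnion S ∧ T.card = ℓ ∧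
      ∀ t ∈ T, ∀ y ∈ Finset.univ.biUnion Dpart \ T, dist t q ≤ dist y q := by
  have hfull : ∀ i, ∀ y ∈ Dpart i, y ∉ S i → (S i).card = ℓ := by
    intro i y hy hyS
    have h1 : (S i).card < (Dpart i).card :=
      Finset.card_lt_card ⟨hsub i, fun h => hyS (h hy)⟩
    have h2 := hcard i
    omega
  have hU : ℓ ≤ (Finset.univ.biUnion S).card := by
    by_cases h : ∃ i, ∃ y ∈ Dpart i, y ∉ S i
    · obtain ⟨i, y, hy, hyS⟩ := h
      rw [← hfull i y hy hyS]
      exact Finset.card_le_card (Finset.subset_biUnion_of_mem S (Finset.mem_univ i))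
    · push Not at h
      refine hbig.trans (Finset.card_le_card ?_)
      exact Finset.biUnion_mono fun i _ y hy => h i y hy
  obtain ⟨T, hTU, hTc, hT⟩ :=
    exists_nearest_aux (fun x => dist x q) (Finset.univ.biUnion S) ℓ hU
  refine ⟨T, hTU, hTc, ?_⟩
  intro t ht y hy
  obtain ⟨hyD, hyT⟩ := Finset.mem_sdiff.1 hy
  by_cases hyU : y ∈ Finset.univ.biUnion S
  · exact hT t ht y (Finset.mem_sdiff.2 ⟨hyU, hyT⟩)
  obtain ⟨i, -, hyi⟩ := Finset.mem_biUnion.1 hyD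
  have hyS : y ∉ S i := fun h => hyU (Finset.mem_biUnion.2 ⟨i, Finset.mem_univ i, h⟩)
  have hyd : y ∈ Dpart i \ S i := Finset.mem_sdiff.2 ⟨hyi, hyS⟩
  have hc := hfull i y hyi hyS
  by_cases hs : S i ⊆ T
  · have hST : S i = T := Finset.eq_of_subset_of_card_le hs (by omega)
    exact hclose i t (hST ▸ ht) y hyd
  · obtain ⟨s, hsS, hsT⟩ := Finset.not_subset.1 hs
    exact (hT t ht s (Finset.mem_sdiff.2
      ⟨Finset.mem_biUnion.2 ⟨i, Finset.mem_univ i, hsS⟩, hsT⟩)).trans (hclose i s hsS y hyd)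
end

section
/- Let S be a finite set of distinct elements of a linear order, let p ∈ S, and let ℓ ≥ 1 be a natural number with ℓ < |{x ∈ S : x ≤ p}|. Then a subset T ⊆ S is the set of ℓ smallest elements of S if and only if T is the set of ℓ smallest elements of {x ∈ S : x ≤ p}. -/
/-- `T` is the set of `ℓ` smallest elements of the finite set `S`:
`T ⊆ S`, `|T| = ℓ`, and every element of `T` is at most every element of
`S \ T`. -/
def IsSmallestL {α : Type*} [LinearOrder α] (ℓ : ℕ) (S T : Finset α) : Prop :=
  T ⊆ S ∧ T.card = ℓ ∧ ∀ x ∈ T, ∀ y ∈ S \ T, x ≤ y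

/-- **Recursion correctness of the selection algorithm, case `s > ℓ`.**
Let `S` be a finite set of distinct elements of a linear order, `p ∈ S`, and
`ℓ ≥ 1` with `ℓ < |{x ∈ S : x ≤ p}|`.  Then a subset `T` is the set of `ℓ`
smallest elements of `S` if and only if `T` is the set of `ℓ` smallest
elements of `{x ∈ S : x ≤ p}`. -/
theorem selection_recursion_max {α : Type*} [LinearOrder α]
    (S : Finset α) (p : α) (hp : p ∈ S)
    (ℓ : ℕ) (hℓ : 1 ≤ ℓ) (hlt : ℓ < (S.filter (fun x => x ≤ p)).card) :
    ∀ T : Finset α,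
      IsSmallestL ℓ S T ↔ IsSmallestL ℓ (S.filter (fun x => x ≤ p)) T := by
  intro T
  constructor
  · rintro ⟨hTS, hc, h⟩
    obtain ⟨z, hz, hzT⟩ := Finset.exists_mem_notMem_of_card_lt_card (hc.symm ▸ hlt)
    rw [Finset.mem_filter] at hz
    refine ⟨fun x hx => ?_, hc, fun x hx y hy => ?_⟩
    · exact Finset.mem_filter.2
        ⟨hTS hx, (h x hx z (Finset.mem_sdiff.2 ⟨hz.1, hzT⟩)).trans hz.2⟩
    · rw [Finset.mem_sdiff, Finset.mem_filter] at hy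
      exact h x hx y (Finset.mem_sdiff.2 ⟨hy.1.1, hy.2⟩)
  · rintro ⟨hTS, hc, h⟩
    refine ⟨hTS.trans (Finset.filter_subset _ _), hc, fun x hx y hy => ?_⟩
    rw [Finset.mem_sdiff] at hy
    rcases le_total y p with hyp | hyp
    · exact h x hx y (Finset.mem_sdiff.2 ⟨Finset.mem_filter.2 ⟨hy.1, hyp⟩, hy.2⟩)
    · exact (Finset.mem_filter.1 (hTS hx)).2.trans hyp
end

section
/- Let S be a finite set of distinct elements of a linear order, let p ∈ S, let s = |{x ∈ S : x ≤ p}|, and let ℓ be a natural number with s < ℓ ≤ |S|. Then the set of ℓ smallest elements of S equals {x ∈ S : x ≤ p} ∪ T', where T' is the set of (ℓ − s) smallest elements of {x ∈ S : x > p}. -/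
theorem IsSmallestL_unique {α : Type*} [LinearOrder α] {ℓ : ℕ} {S T U : Finset α}
    (hT : IsSmallestL ℓ S T) (hU : IsSmallestL ℓ S U) : T = U := by
  obtain ⟨hTS, hTc, hT⟩ := hT
  obtain ⟨hUS, hUc, hU⟩ := hU
  apply Finset.eq_of_subset_of_card_le _ (by omega)
  intro x hx
  by_contra hxU
  have h : ¬ U ⊆ T := fun h => hxU (by
    rw [Finset.eq_of_subset_of_card_le h (by omega)]; exact hx)
  obtain ⟨y, hyU, hyT⟩ := Finset.not_subset.1 h
  have h1 := hT x hx y (Finset.mem_sdiff.2 ⟨hUS hyU, hyT⟩)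
  have h2 := hU y hyU x (Finset.mem_sdiff.2 ⟨hTS hx, hxU⟩)
  exact hyT (le_antisymm h1 h2 ▸ hx)

/-- **Recursion correctness of the selection algorithm, case `s < ℓ`.**
Let `S` be a finite set of distinct elements of a linear order, `p ∈ S`,
`s = |{x ∈ S : x ≤ p}|`, and `s < ℓ ≤ |S|`.  Then the set of `ℓ` smallest
elements of `S` equals `{x ∈ S : x ≤ p} ∪ T'`, where `T'` is the set of
`ℓ − s` smallest elements of `{x ∈ S : x > p}`:  the union is a set of `ℓ`
smallest elements of `S`, and any set of `ℓ` smallest elements of `S` equals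
that union. -/
theorem selection_recursion_min {α : Type*} [LinearOrder α]
    (S : Finset α) (p : α) (hp : p ∈ S)
    (s ℓ : ℕ) (hs : s = (S.filter (fun x => x ≤ p)).card)
    (hsl : s < ℓ) (hℓS : ℓ ≤ S.card) :
    ∀ T' : Finset α,
      IsSmallestL (ℓ - s) (S.filter (fun x => p < x)) T' →
        IsSmallestL ℓ S (S.filter (fun x => x ≤ p) ∪ T') ∧
        ∀ T : Finset α, IsSmallestL ℓ S T →
          T = S.filter (fun x => x ≤ p) ∪ T' := by
  intro T' hT'
  have key : IsSmallestL ℓ S (S.filter (fun x => x ≤ p) ∪ T') := by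
    obtain ⟨hsub, hc, hle⟩ := hT'
    refine ⟨?_, ?_, ?_⟩
    · exact Finset.union_subset (Finset.filter_subset _ _)
        (hsub.trans (Finset.filter_subset _ _))
    · rw [Finset.card_union_of_disjoint, hc, ← hs]
      · omega
      · rw [Finset.disjoint_left]
        intro x hx hx'
        exact absurd (Finset.mem_filter.1 (hsub hx')).2 (not_lt.2 (Finset.mem_filter.1 hx).2)
    · intro x hx y hy
      simp only [Finset.mem_sdiff, Finset.mem_union, Finset.mem_filter, not_or, not_and,
        not_le] at hx hy
      obtain ⟨hyS, hyp, hyT⟩ := hy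
      rcases hx with hx | hx
      · exact hx.2.trans (hyp hyS).le
      · exact hle x hx y (Finset.mem_sdiff.2 ⟨Finset.mem_filter.2 ⟨hyS, hyp hyS⟩, hyT⟩)
  exact ⟨key, fun T hT => IsSmallestL_unique hT key⟩
end
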